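/- Let (H, g) be a finite type unimodular pivotal Hopf G-coalgebra over a field k, let μ be a right G-integral with μ_α ≠ 0 for all α ∈ G, let μ̃_α(x) := μ_α(g_α x), and let t be the right modified trace on H-pmod determined by t_{H_α}(f) = μ̃_α(f(1_α)). Then (H, g) is G-unibalanced — i.e. μ̃ also satisfies the symmetrised left G-integral relation μ̃_β(x_{(2)}) · g_α⁻¹ x_{(1)} = μ̃_{αβ}(x) · 1_α for all x ∈ H_{αβ}, where Δ_{α,β}(x) = x_{(1)} ⊗ x_{(2)} — if and only if t is also a left modified trace. -/

import Mathlib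

/-!
Write `μ̃(x) = μ(g x)`, let `W` be an `H_β`-module and put `γ = βα`. For `w ∈ W` and a linear form
`l` on `W` there are `H_γ`-linear maps

* `u_w : H_γ → W ⊗ H_α`, `x ↦ x₍₁₎ w ⊗ x₍₂₎` (`freeIn`),
* `v_l : W ⊗ H_α → H_γ`, `w ⊗ x ↦ l(S⁻¹(x₍₁₎) w) x₍₂₎` (`freeOut`),

with `v_l u_w = l(w)` and `Σⱼ u_{wⱼ} v_{wʲ} = id` for dual bases `wⱼ`, `wʲ` of `W`
(`freeOut_freeIn`, `sum_freeIn_freeOut`). In particular `W ⊗ H_α` is projective. Here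
`S⁻¹(x) = g⁻¹ S(x) g` is available because the pivot implements `S²`; that it inverts `S` in the
Hopf sense needs the antimultiplicativity of the antipode (`anti_mul`).

Unibalanced implies left modified trace (`IsUnibalanced.hasLeftPartialTraceProperty`). Let
`(aᵢ, bᵢ)` be a dual basis of the projective module `P`. By cyclicity `t_{W⊗P}(f)` is the sum over
`i, j` of `μ̃(v_{wʲ}((1 ⊗ bᵢ) f(wⱼ ⊗ aᵢ)))`. The unibalanced relation in degrees `(β⁻¹, βα)`,
together with `S⁻¹(g_{β⁻¹}) = g_β⁻¹`, gives `μ̃(v_l(w ⊗ x)) = l(g⁻¹ w) μ̃(x)`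
(`IsUnibalanced.integral_freeOut`). So the `i`-th part of the sum is the trace over `W` of
`g⁻¹ Φᵢ`, where `Φᵢ(w) = (id ⊗ μ̃ bᵢ) f(w ⊗ aᵢ)`. On the other side, `t_P(tr^l_W(f))` is the sum of
the traces of `Φᵢ g⁻¹`, and the two agree.

Left modified trace implies unibalanced (`isUnibalanced_of_hasLeftPartialTraceProperty`). Take
`W = H_β`, `P = H_α` and `f = u_1 ∘ r_x ∘ v_l`, where `r_x` is right multiplication by `x ∈ H_γ`.
Cyclicity and `v_l u_1 = l(1)` give `t(f) = l(1) μ̃(x)`. The left partial trace of `f` is right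
multiplication by `l(g⁻¹ x₍₁₎) x₍₂₎` (`trL_test`), whose trace is `l(g⁻¹ x₍₁₎) μ̃(x₍₂₎)`. Equality
for every linear form `l` is the unibalanced relation.
-/

open scoped TensorProduct

/-- Transport along an equality of indices, as an algebra isomorphism. -/
def castAlg (k : Type) [CommSemiring k] {G : Type} {H : G → Type}
    [∀ γ : G, Ring (H γ)] [∀ γ : G, Algebra k (H γ)]
    {γ γ' : G} (h : γ = γ') : H γ ≃ₐ[k] H γ' := by
  subst h; exact AlgEquiv.refl

/-- A Hopf `G`-coalgebra over a field `k`. -/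
structure HopfGCoalgebra (k G : Type) [Field k] [Group G] (H : G → Type)
    [∀ γ : G, Ring (H γ)] [∀ γ : G, Algebra k (H γ)] where
  Δ : ∀ α β : G, H (α * β) →ₐ[k] (H α ⊗[k] H β)
  ε : H (1 : G) →ₐ[k] k
  S : ∀ γ : G, H γ →ₗ[k] H γ⁻¹
  coassoc : ∀ (α β γ : G) (x : H (α * β * γ)),
    (TensorProduct.map (Δ α β).toLinearMap LinearMap.id) (Δ (α * β) γ x)
      = (TensorProduct.assoc k (H α) (H β) (H γ)).symm
          ((TensorProduct.map LinearMap.id (Δ β γ).toLinearMap)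
            (Δ α (β * γ) (castAlg k (mul_assoc α β γ) x)))
  counit_right : ∀ (α : G) (x : H (α * 1)),
    (TensorProduct.rid k (H α)) ((TensorProduct.map LinearMap.id ε.toLinearMap) (Δ α 1 x))
      = castAlg k (mul_one α) x
  counit_left : ∀ (α : G) (x : H (1 * α)),
    (TensorProduct.lid k (H α)) ((TensorProduct.map ε.toLinearMap LinearMap.id) (Δ 1 α x))
      = castAlg k (one_mul α) x
  antipode_left : ∀ (α : G) (x : H (α⁻¹ * α)),
    (LinearMap.mul' k (H α))
      ((TensorProduct.map ((castAlg k (inv_inv α)).toLinearMap ∘ₗ S α⁻¹) LinearMap.id)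
        (Δ α⁻¹ α x))
      = ε (castAlg k (inv_mul_cancel α) x) • 1
  antipode_right : ∀ (α : G) (x : H (α * α⁻¹)),
    (LinearMap.mul' k (H α))
      ((TensorProduct.map LinearMap.id ((castAlg k (inv_inv α)).toLinearMap ∘ₗ S α⁻¹))
        (Δ α α⁻¹ x))
      = ε (castAlg k (mul_inv_cancel α) x) • 1

namespace HopfGCoalgebra

variable {k G : Type} [Field k] [Group G] {H : G → Type}
  [∀ γ : G, Ring (H γ)] [∀ γ : G, Algebra k (H γ)]

/-- A family of linear forms is a right `G`-integral. -/
def IsRightIntegral (D : HopfGCoalgebra k G H) (μ : ∀ γ : G, H γ →ₗ[k] k) : Prop :=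
  ∀ (α β : G) (x : H (α * β)),
    (TensorProduct.lid k (H β)) ((TensorProduct.map (μ α) LinearMap.id) (D.Δ α β x))
      = μ (α * β) x • 1

/-- A family of linear forms is a left `G`-integral. -/
def IsLeftIntegral (D : HopfGCoalgebra k G H) (μ : ∀ γ : G, H γ →ₗ[k] k) : Prop :=
  ∀ (α β : G) (x : H (α * β)),
    (TensorProduct.rid k (H α)) ((TensorProduct.map LinearMap.id (μ β)) (D.Δ α β x))
      = μ (α * β) x • 1

/-- A family of invertible elements is a pivot. -/
structure IsPivot (D : HopfGCoalgebra k G H) (g : ∀ γ : G, (H γ)ˣ) : Prop where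
  delta : ∀ α β : G, D.Δ α β (g (α * β) : H (α * β)) = (g α : H α) ⊗ₜ[k] (g β : H β)
  counit : D.ε (g 1 : H 1) = 1
  antipode : ∀ (α : G) (x : H α),
    castAlg k (inv_inv α) (D.S α⁻¹ (D.S α x)) = (g α : H α) * x * ((g α)⁻¹ : (H α)ˣ)

/-- `H` is unimodular if `H₁` admits a nonzero two-sided cointegral. -/
def IsUnimodular (D : HopfGCoalgebra k G H) : Prop :=
  ∃ Λ : H 1, Λ ≠ 0 ∧ ∀ h : H 1, h * Λ = D.ε h • Λ ∧ Λ * h = D.ε h • Λ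

/-- A `G`-comodulus for a right `G`-integral `μ`. -/
structure IsComodulus (D : HopfGCoalgebra k G H) (μ : ∀ γ : G, H γ →ₗ[k] k)
    (a : ∀ γ : G, (H γ)ˣ) : Prop where
  delta : ∀ α β : G, D.Δ α β (a (α * β) : H (α * β)) = (a α : H α) ⊗ₜ[k] (a β : H β)
  counit : D.ε (a 1 : H 1) = 1
  rel : ∀ (α β : G) (x : H (α * β)),
    (TensorProduct.rid k (H α)) ((TensorProduct.map LinearMap.id (μ β)) (D.Δ α β x))
      = μ (α * β) x • (a α : H α)

end HopfGCoalgebra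

namespace HopfGCoalgebra

variable {k G : Type} [Field k] [Group G] {H : G → Type}
  [∀ γ : G, Ring (H γ)] [∀ γ : G, Algebra k (H γ)]

/-- The trivial `H₁`-module structure on a `k`-vector space, `h • w = ε(h) • w`. -/
def trivialModule (D : HopfGCoalgebra k G H) (W : Type) [AddCommGroup W] [Module k W] :
    Module (H (1 : G)) W :=
  Module.compHom W D.ε.toRingHom

theorem trivialModuleTower (D : HopfGCoalgebra k G H) (W : Type) [AddCommGroup W]
    [Module k W] :
    letI := D.trivialModule W
    IsScalarTower k (H (1 : G)) W := by
  letI := D.trivialModule W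
  refine ⟨fun c h w => ?_⟩
  show D.ε (c • h) • w = c • (D.ε h • w)
  rw [map_smul, smul_eq_mul, mul_smul]

/-- The representation of `H_γ` (for `γ = αβ`) on `P ⊗ W` obtained from an `H_α`-module `P`
and an `H_β`-module `W` through the coproduct `Δ_{α,β}`. -/
noncomputable def deltaRep (D : HopfGCoalgebra k G H) (α β γ : G) (hγ : γ = α * β)
    (P W : Type) [AddCommGroup P] [Module k P] [Module (H α) P] [IsScalarTower k (H α) P]
    [AddCommGroup W] [Module k W] [Module (H β) W] [IsScalarTower k (H β) W] :
    H γ →ₐ[k] Module.End k (P ⊗[k] W) :=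
  (Module.endTensorEndAlgHom.comp
      (Algebra.TensorProduct.map (Algebra.lsmul k k P) (Algebra.lsmul k k W))).comp
    ((D.Δ α β).comp (castAlg k hγ).toAlgHom)

/-- The `H_γ`-module structure on `P ⊗ W` (for `γ = αβ`) induced by `Δ_{α,β}`. -/
noncomputable def tensorModule (D : HopfGCoalgebra k G H) (α β γ : G) (hγ : γ = α * β)
    (P W : Type) [AddCommGroup P] [Module k P] [Module (H α) P] [IsScalarTower k (H α) P]
    [AddCommGroup W] [Module k W] [Module (H β) W] [IsScalarTower k (H β) W] :
    Module (H γ) (P ⊗[k] W) :=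
  Module.compHom (P ⊗[k] W) (D.deltaRep α β γ hγ P W).toRingHom

theorem tensorModuleTower (D : HopfGCoalgebra k G H) (α β γ : G) (hγ : γ = α * β)
    (P W : Type) [AddCommGroup P] [Module k P] [Module (H α) P] [IsScalarTower k (H α) P]
    [AddCommGroup W] [Module k W] [Module (H β) W] [IsScalarTower k (H β) W] :
    letI := D.tensorModule α β γ hγ P W
    IsScalarTower k (H γ) (P ⊗[k] W) := by
  letI := D.tensorModule α β γ hγ P W
  refine ⟨fun c h x => ?_⟩
  show (D.deltaRep α β γ hγ P W (c • h)) x = c • (D.deltaRep α β γ hγ P W h) x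
  rw [map_smul]
  rfl

/-- The right partial trace `tr^r_W(f)` of a `k`-linear map `f : P ⊗ W → P ⊗ W`, computed
with the duality morphisms of the pivotal structure (`gβ` is the pivot in degree `β`). -/
noncomputable def trR (β : G) (P W : Type)
    [AddCommGroup P] [Module k P]
    [AddCommGroup W] [Module k W] [Module (H β) W] [IsScalarTower k (H β) W]
    [FiniteDimensional k W]
    (gβ : H β) (f : (P ⊗[k] W) →ₗ[k] (P ⊗[k] W)) : P →ₗ[k] P :=
  (TensorProduct.rid k P).toLinearMap
    ∘ₗ TensorProduct.map LinearMap.id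
        (contractRight k W ∘ₗ TensorProduct.map (Algebra.lsmul k k W gβ) LinearMap.id)
    ∘ₗ (TensorProduct.assoc k P W (Module.Dual k W)).toLinearMap
    ∘ₗ TensorProduct.map f LinearMap.id
    ∘ₗ (TensorProduct.assoc k P W (Module.Dual k W)).symm.toLinearMap
    ∘ₗ TensorProduct.map LinearMap.id (coevaluation k W)
    ∘ₗ (TensorProduct.rid k P).symm.toLinearMap

/-- The left partial trace `tr^l_W(f)` of a `k`-linear map `f : W ⊗ P → W ⊗ P`, computed
with the duality morphisms of the pivotal structure (`gβinv` is the inverse of the pivot in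
degree `β`). -/
noncomputable def trL (β : G) (W P : Type)
    [AddCommGroup P] [Module k P]
    [AddCommGroup W] [Module k W] [Module (H β) W] [IsScalarTower k (H β) W]
    [FiniteDimensional k W]
    (gβinv : H β) (f : (W ⊗[k] P) →ₗ[k] (W ⊗[k] P)) : P →ₗ[k] P :=
  (TensorProduct.lid k P).toLinearMap
    ∘ₗ TensorProduct.map (contractLeft k W) LinearMap.id
    ∘ₗ (TensorProduct.assoc k (Module.Dual k W) W P).symm.toLinearMap
    ∘ₗ TensorProduct.map LinearMap.id f
    ∘ₗ (TensorProduct.assoc k (Module.Dual k W) W P).toLinearMap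
    ∘ₗ TensorProduct.map
        ((TensorProduct.comm k W (Module.Dual k W)).toLinearMap
          ∘ₗ TensorProduct.map (Algebra.lsmul k k W gβinv) LinearMap.id
          ∘ₗ coevaluation k W)
        LinearMap.id
    ∘ₗ (TensorProduct.lid k P).symm.toLinearMap

end HopfGCoalgebra

/-- The data of a `k`-linear form on `End_{H_γ}(P)` for every `γ ∈ G` and every
finite-dimensional projective `H_γ`-module `P`. -/
abbrev TraceData (k G : Type) [Field k] [Group G] (H : G → Type)
    [∀ γ : G, Ring (H γ)] [∀ γ : G, Algebra k (H γ)] : Type 1 :=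
  ∀ (γ : G) (P : Type) [AddCommGroup P] [Module k P] [Module (H γ) P]
    [IsScalarTower k (H γ) P] [FiniteDimensional k P] [Module.Projective (H γ) P],
    (P →ₗ[H γ] P) →ₗ[k] k

namespace HopfGCoalgebra

variable {k G : Type} [Field k] [Group G] {H : G → Type}
  [∀ γ : G, Ring (H γ)] [∀ γ : G, Algebra k (H γ)]

/-- A cyclic trace on `H`-pmod. -/
def IsCyclicTrace (t : TraceData k G H) : Prop :=
  ∀ (γ : G) (P Q : Type)
    [AddCommGroup P] [Module k P] [Module (H γ) P] [IsScalarTower k (H γ) P]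
    [FiniteDimensional k P] [Module.Projective (H γ) P]
    [AddCommGroup Q] [Module k Q] [Module (H γ) Q] [IsScalarTower k (H γ) Q]
    [FiniteDimensional k Q] [Module.Projective (H γ) Q]
    (f : P →ₗ[H γ] Q) (g : Q →ₗ[H γ] P),
    t γ P (g.comp f) = t γ Q (f.comp g)

/-- The right partial trace property of a trace `t`:
`t_{P⊗W}(f) = t_P(tr^r_W(f))` for every projective `H_α`-module `P`, finite-dimensional
`H_β`-module `W`, and `H_{αβ}`-linear endomorphism `f` of `P ⊗ W`. -/
def HasRightPartialTraceProperty (D : HopfGCoalgebra k G H) (g : ∀ γ : G, (H γ)ˣ)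
    (t : TraceData k G H) : Prop :=
  ∀ (α β : G) (P W : Type)
    [AddCommGroup P] [Module k P] [Module (H α) P] [IsScalarTower k (H α) P]
    [FiniteDimensional k P] [Module.Projective (H α) P]
    [AddCommGroup W] [Module k W] [Module (H β) W] [IsScalarTower k (H β) W]
    [FiniteDimensional k W],
    letI := D.tensorModule α β (α * β) rfl P W
    haveI := D.tensorModuleTower α β (α * β) rfl P W
    ∀ [Module.Projective (H (α * β)) (P ⊗[k] W)]
      (f : (P ⊗[k] W) →ₗ[H (α * β)] (P ⊗[k] W)) (f' : P →ₗ[H α] P),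
      f'.restrictScalars k = trR β P W (g β : H β) (f.restrictScalars k) →
      t (α * β) (P ⊗[k] W) f = t α P f'

/-- The left partial trace property of a trace `t`:
`t_{W⊗P}(f) = t_P(tr^l_W(f))` for every projective `H_α`-module `P`, finite-dimensional
`H_β`-module `W`, and `H_{βα}`-linear endomorphism `f` of `W ⊗ P`. -/
def HasLeftPartialTraceProperty (D : HopfGCoalgebra k G H) (g : ∀ γ : G, (H γ)ˣ)
    (t : TraceData k G H) : Prop :=
  ∀ (α β : G) (P W : Type)
    [AddCommGroup P] [Module k P] [Module (H α) P] [IsScalarTower k (H α) P]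
    [FiniteDimensional k P] [Module.Projective (H α) P]
    [AddCommGroup W] [Module k W] [Module (H β) W] [IsScalarTower k (H β) W]
    [FiniteDimensional k W],
    letI := D.tensorModule β α (β * α) rfl W P
    haveI := D.tensorModuleTower β α (β * α) rfl W P
    ∀ [Module.Projective (H (β * α)) (W ⊗[k] P)]
      (f : (W ⊗[k] P) →ₗ[H (β * α)] (W ⊗[k] P)) (f' : P →ₗ[H α] P),
      f'.restrictScalars k = trL β W P (((g β)⁻¹ : (H β)ˣ) : H β) (f.restrictScalars k) →
      t (β * α) (W ⊗[k] P) f = t α P f'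

/-- A right modified trace on `H`-pmod. -/
def IsRightModifiedTrace (D : HopfGCoalgebra k G H) (g : ∀ γ : G, (H γ)ˣ)
    (t : TraceData k G H) : Prop :=
  IsCyclicTrace t ∧ D.HasRightPartialTraceProperty g t

/-- A left modified trace on `H`-pmod. -/
def IsLeftModifiedTrace (D : HopfGCoalgebra k G H) (g : ∀ γ : G, (H γ)ˣ)
    (t : TraceData k G H) : Prop :=
  IsCyclicTrace t ∧ D.HasLeftPartialTraceProperty g t

end HopfGCoalgebra

/-! ### Coproduct and antipode over propositionally equal indices -/

namespace HopfGCoalgebra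

section Transport

variable {k G : Type} [Field k] {H : G → Type}
  [∀ γ : G, Ring (H γ)] [∀ γ : G, Algebra k (H γ)]

theorem castAlg_trans {γ γ' γ'' : G} (h : γ = γ') (h' : γ' = γ'') (x : H γ) :
    castAlg k h' (castAlg k h x) = castAlg k (h.trans h') x := by
  subst h; subst h'; rfl

end Transport

variable {k G : Type} [Field k] [Group G] {H : G → Type}
  [∀ γ : G, Ring (H γ)] [∀ γ : G, Algebra k (H γ)]

/-- The coproduct `H_γ → H_α ⊗ H_β` for an index `γ` that is only propositionally equal
to `αβ`. -/
noncomputable def cop (D : HopfGCoalgebra k G H) {α β γ : G} (h : γ = α * β) :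
    H γ →ₐ[k] (H α ⊗[k] H β) :=
  (D.Δ α β).comp (castAlg k h).toAlgHom

/-- The antipode `H_α → H_β` for an index `β` that is only propositionally equal to `α⁻¹`. -/
noncomputable def anti (D : HopfGCoalgebra k G H) {α β : G} (h : α⁻¹ = β) : H α →ₗ[k] H β :=
  (castAlg k h).toLinearMap ∘ₗ D.S α

theorem cop_coassoc (D : HopfGCoalgebra k G H) {α β γ δ₁ δ₂ δ : G}
    (h₁ : δ₁ = α * β) (h₂ : δ₂ = β * γ) (h : δ = δ₁ * γ) (h' : δ = α * δ₂) (x : H δ) :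
    (TensorProduct.map (D.cop h₁).toLinearMap LinearMap.id) (D.cop h x)
      = (TensorProduct.assoc k (H α) (H β) (H γ)).symm
          ((TensorProduct.map LinearMap.id (D.cop h₂).toLinearMap) (D.cop h' x)) := by
  subst h₁; subst h₂; subst h
  exact D.coassoc α β γ x

theorem cop_counit_left (D : HopfGCoalgebra k G H) {α : G} (h : α = 1 * α) (x : H α) :
    (TensorProduct.lid k (H α)) ((TensorProduct.map D.ε.toLinearMap LinearMap.id)
      (D.cop h x)) = x := by
  refine (D.counit_left α (castAlg k h x)).trans ?_
  rw [castAlg_trans]; rfl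

theorem cop_counit_right (D : HopfGCoalgebra k G H) {α : G} (h : α = α * 1) (x : H α) :
    (TensorProduct.rid k (H α)) ((TensorProduct.map LinearMap.id D.ε.toLinearMap)
      (D.cop h x)) = x := by
  refine (D.counit_right α (castAlg k h x)).trans ?_
  rw [castAlg_trans]; rfl

theorem anti_left (D : HopfGCoalgebra k G H) {α β : G} (h : α⁻¹ = β) (h1 : 1 = α * β)
    (x : H 1) :
    LinearMap.mul' k (H β) (TensorProduct.map (D.anti h) LinearMap.id (D.cop h1 x))
      = D.ε x • 1 := by
  obtain rfl : α = β⁻¹ := by rw [← h, inv_inv]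
  refine (D.antipode_left β (castAlg k h1 x)).trans ?_
  rw [castAlg_trans]; rfl

theorem anti_right (D : HopfGCoalgebra k G H) {α β : G} (h : β⁻¹ = α) (h1 : 1 = α * β)
    (x : H 1) :
    LinearMap.mul' k (H α) (TensorProduct.map LinearMap.id (D.anti h) (D.cop h1 x))
      = D.ε x • 1 := by
  obtain rfl : β = α⁻¹ := by rw [← h, inv_inv]
  refine (D.antipode_right α (castAlg k h1 x)).trans ?_
  rw [castAlg_trans]; rfl

/-- If a linear map `T` on the threefold coproduct satisfies `T(a₍₁₎ ⊗ a₍₂₎ ⊗ c) = ε(a) F(c)`,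
then `T(x₍₁₎ ⊗ x₍₂₎ ⊗ x₍₃₎) = F(x)`: this replaces contraction of the first two Sweedler legs. -/
theorem sweedler_cancel_left (D : HopfGCoalgebra k G H) {α β γ δ : G}
    {Z : Type} [AddCommGroup Z] [Module k Z]
    (h1 : 1 = α * β) (h2 : δ = β * γ) (h3 : γ = α * δ)
    (T : (H α ⊗[k] H β) ⊗[k] H γ →ₗ[k] Z) (F : H γ →ₗ[k] Z)
    (hT : ∀ (a : H 1) (c : H γ), T (D.cop h1 a ⊗ₜ c) = D.ε a • F c) (x : H γ) :
    T ((TensorProduct.assoc k (H α) (H β) (H γ)).symm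
          ((TensorProduct.map LinearMap.id (D.cop h2).toLinearMap) (D.cop h3 x))) = F x := by
  have h4 : γ = 1 * γ := (one_mul γ).symm
  rw [← D.cop_coassoc h1 h2 h4 h3]
  have key : T ∘ₗ (TensorProduct.map (D.cop h1).toLinearMap LinearMap.id)
      = F ∘ₗ (TensorProduct.lid k (H γ)).toLinearMap
          ∘ₗ (TensorProduct.map D.ε.toLinearMap LinearMap.id) := by
    ext a c
    simpa using hT a c
  refine (LinearMap.congr_fun key (D.cop h4 x)).trans ?_
  simp only [LinearMap.comp_apply, LinearEquiv.coe_coe]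
  rw [D.cop_counit_left h4 x]

/-- The mirror image of `sweedler_cancel_left`, contracting the last two Sweedler legs. -/
theorem sweedler_cancel_right (D : HopfGCoalgebra k G H) {α β γ : G}
    {Z : Type} [AddCommGroup Z] [Module k Z]
    (h1 : 1 = β * γ) (h3 : α = α * 1)
    (T : (H α ⊗[k] H β) ⊗[k] H γ →ₗ[k] Z) (F : H α →ₗ[k] Z)
    (hT : ∀ (c : H α) (a : H 1),
      T ((TensorProduct.assoc k (H α) (H β) (H γ)).symm (c ⊗ₜ D.cop h1 a)) = D.ε a • F c)
    (x : H α) :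
    T ((TensorProduct.assoc k (H α) (H β) (H γ)).symm
          ((TensorProduct.map LinearMap.id (D.cop h1).toLinearMap) (D.cop h3 x))) = F x := by
  have key : T ∘ₗ (TensorProduct.assoc k (H α) (H β) (H γ)).symm.toLinearMap
        ∘ₗ (TensorProduct.map LinearMap.id (D.cop h1).toLinearMap)
      = F ∘ₗ (TensorProduct.rid k (H α)).toLinearMap
          ∘ₗ (TensorProduct.map LinearMap.id D.ε.toLinearMap) := by
    ext c a
    simpa using hT c a
  refine (LinearMap.congr_fun key (D.cop h3 x)).trans ?_
  simp only [LinearMap.comp_apply, LinearEquiv.coe_coe]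
  rw [D.cop_counit_right h3 x]

/-- In degrees `(α, α⁻¹, α)` the first two and the last two legs of a threefold coproduct can both
be contracted. If both contractions of `T` are known, the two results agree. Uniqueness of
convolution inverses takes this form here. -/
theorem sweedler_bracket (D : HopfGCoalgebra k G H) {α β : G}
    {Z : Type} [AddCommGroup Z] [Module k Z]
    (h1 : 1 = α * β) (h2 : 1 = β * α)
    (T : (H α ⊗[k] H β) ⊗[k] H α →ₗ[k] Z) (F₁ F₂ : H α →ₗ[k] Z)
    (hT₁ : ∀ (a : H 1) (c : H α), T (D.cop h1 a ⊗ₜ c) = D.ε a • F₁ c)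
    (hT₂ : ∀ (c : H α) (a : H 1),
      T ((TensorProduct.assoc k (H α) (H β) (H α)).symm (c ⊗ₜ D.cop h2 a)) = D.ε a • F₂ c)
    (x : H α) : F₁ x = F₂ x := by
  rw [← D.sweedler_cancel_left h1 h2 (mul_one α).symm T F₁ hT₁ x]
  exact D.sweedler_cancel_right h2 (mul_one α).symm T F₂ hT₂ x

theorem anti_one (D : HopfGCoalgebra k G H) {α β : G} (h : α⁻¹ = β) : D.anti h 1 = 1 := by
  have h1 : 1 = α * β := by rw [← h, mul_inv_cancel]
  have := D.anti_left h h1 1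
  simpa [Algebra.TensorProduct.one_def] using this

/-- `Σ S(x₍₁₎ y) x₍₂₎ = ε(x) S(y)`, the first half of the antimultiplicativity of `S`. -/
theorem anti_mul_aux (D : HopfGCoalgebra k G H) {α β : G} (h : α⁻¹ = β) (h1 : 1 = α * β)
    (x : H 1) (y : H α) :
    LinearMap.mul' k (H β) (TensorProduct.map (D.anti h ∘ₗ LinearMap.mulRight k y)
      LinearMap.id (D.cop h1 x)) = D.ε x • D.anti h y := by
  have h2 : 1 = β * α := by rw [← h, inv_mul_cancel]
  symm
  let A : H α ⊗[k] H β →ₗ[k] H β :=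
    LinearMap.mul' k (H β) ∘ₗ TensorProduct.map (D.anti h) LinearMap.id
      ∘ₗ LinearMap.mulLeft k (D.cop h1 x)
  refine D.sweedler_bracket h1 h2 (LinearMap.mul' k (H β) ∘ₗ TensorProduct.map A (D.anti h))
    (D.ε x • D.anti h)
    (A ∘ₗ (TensorProduct.mk k (H α) (H β)).flip 1) ?_ ?_ y |>.trans ?_
  · intro a c
    simp only [A, LinearMap.comp_apply, TensorProduct.map_tmul, LinearMap.mulLeft_apply,
      ← map_mul, D.anti_left h h1, LinearMap.mul'_apply, LinearMap.smul_apply]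
    rw [map_mul, smul_mul_assoc, one_mul, smul_smul, mul_comm]
  · intro c a
    have hA : ∀ b : H β, A (c ⊗ₜ b) = A (c ⊗ₜ 1) * b := by
      intro b
      simp only [A, LinearMap.comp_apply, LinearMap.mulLeft_apply]
      induction D.cop h1 x using TensorProduct.induction_on with
      | zero => simp
      | tmul p q => simp [mul_assoc]
      | add p q hp hq => simp only [add_mul, map_add, hp, hq]
    have key : ∀ z : H β ⊗[k] H α,
        (LinearMap.mul' k (H β) ∘ₗ TensorProduct.map A (D.anti h))
          ((TensorProduct.assoc k (H α) (H β) (H α)).symm (c ⊗ₜ z))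
        = A (c ⊗ₜ 1) * LinearMap.mul' k (H β) (TensorProduct.map LinearMap.id (D.anti h) z) := by
      intro z
      induction z using TensorProduct.induction_on with
      | zero => simp
      | tmul p q => simp [hA p, mul_assoc]
      | add p q hp hq => simp only [TensorProduct.tmul_add, map_add, hp, hq, mul_add]
    rw [key, D.anti_right h h2]
    simp
  · simp only [A, LinearMap.comp_apply, LinearMap.mulLeft_apply]
    induction D.cop h1 x using TensorProduct.induction_on with
    | zero => simp
    | tmul p q => simp
    | add p q hp hq =>
      simp only [map_add, add_mul] at hp hq ⊢
      rw [hp, hq]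

/-- The antipode is antimultiplicative. -/
theorem anti_mul (D : HopfGCoalgebra k G H) {α β : G} (h : α⁻¹ = β) (x y : H α) :
    D.anti h (x * y) = D.anti h y * D.anti h x := by
  have h1 : 1 = α * β := by rw [← h, mul_inv_cancel]
  have h2 : 1 = β * α := by rw [← h, inv_mul_cancel]
  symm
  refine D.sweedler_bracket h1 h2 (LinearMap.mul' k (H β) ∘ₗ TensorProduct.map
      (LinearMap.mul' k (H β) ∘ₗ
        TensorProduct.map (D.anti h ∘ₗ LinearMap.mulRight k y) LinearMap.id) (D.anti h))
    (LinearMap.mulLeft k (D.anti h y) ∘ₗ D.anti h) (D.anti h ∘ₗ LinearMap.mulRight k y) ?_ ?_ x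
  · intro a c
    simp only [LinearMap.comp_apply, TensorProduct.map_tmul, D.anti_mul_aux h h1 a y]
    simp
  · intro c a
    have key : ∀ z : H β ⊗[k] H α,
        (LinearMap.mul' k (H β) ∘ₗ TensorProduct.map
          (LinearMap.mul' k (H β) ∘ₗ
            TensorProduct.map (D.anti h ∘ₗ LinearMap.mulRight k y) LinearMap.id) (D.anti h))
          ((TensorProduct.assoc k (H α) (H β) (H α)).symm (c ⊗ₜ z))
        = D.anti h (c * y) *
          LinearMap.mul' k (H β) (TensorProduct.map LinearMap.id (D.anti h) z) := by
      intro z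
      induction z using TensorProduct.induction_on with
      | zero => simp
      | tmul p q => simp [mul_assoc]
      | add p q hp hq => simp only [TensorProduct.tmul_add, map_add, hp, hq, mul_add]
    rw [key, D.anti_right h h2]
    simp

end HopfGCoalgebra

/-! ### The pivot, the inverse antipode and the untwisting of `W ⊗ H_α` -/

namespace HopfGCoalgebra

variable {k G : Type} [Field k] [Group G] {H : G → Type}
  [∀ γ : G, Ring (H γ)] [∀ γ : G, Algebra k (H γ)]

theorem IsPivot.cop {D : HopfGCoalgebra k G H} {g : ∀ γ : G, (H γ)ˣ} (hpiv : D.IsPivot g)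
    {α β γ : G} (h : γ = α * β) :
    D.cop h (g γ : H γ) = (g α : H α) ⊗ₜ[k] (g β : H β) := by
  subst h; exact hpiv.delta α β

theorem IsPivot.anti_anti {D : HopfGCoalgebra k G H} {g : ∀ γ : G, (H γ)ˣ}
    (hpiv : D.IsPivot g) {α β : G} (h : α⁻¹ = β) (h' : β⁻¹ = α) (x : H α) :
    D.anti h' (D.anti h x) * (g α : H α) = (g α : H α) * x := by
  subst h
  have := hpiv.antipode α x
  have h2 : D.anti h' (D.anti rfl x) = (g α : H α) * x * ((g α)⁻¹ : (H α)ˣ) := this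
  rw [h2, Units.inv_mul_cancel_right]

/-- The antipode inverts the pivot, as it does every grouplike family. -/
theorem IsPivot.anti_pivot {D : HopfGCoalgebra k G H} {g : ∀ γ : G, (H γ)ˣ}
    (hpiv : D.IsPivot g) {α β : G} (h : α⁻¹ = β) :
    D.anti h (g α : H α) = (((g β)⁻¹ : (H β)ˣ) : H β) := by
  have h1 : 1 = α * β := by rw [← h, mul_inv_cancel]
  have := D.anti_left h h1 (g 1 : H 1)
  rw [hpiv.cop h1, hpiv.counit] at this
  simp only [TensorProduct.map_tmul, LinearMap.mul'_apply, LinearMap.id_apply, one_smul] at this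
  rw [← Units.mul_left_inj (g β), this, Units.inv_mul]

/-- The inverse antipode `H_{β⁻¹} → H_β`, expressed through the pivot as
`x ↦ g_β⁻¹ S(x) g_β`. -/
noncomputable def antiInv (D : HopfGCoalgebra k G H) (g : ∀ γ : G, (H γ)ˣ) (β : G) :
    H β⁻¹ →ₗ[k] H β :=
  LinearMap.mulLeft k (((g β)⁻¹ : (H β)ˣ) : H β) ∘ₗ LinearMap.mulRight k (g β : H β)
    ∘ₗ D.anti (inv_inv β)

theorem antiInv_apply (D : HopfGCoalgebra k G H) (g : ∀ γ : G, (H γ)ˣ) (β : G) (x : H β⁻¹) :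
    D.antiInv g β x
      = (((g β)⁻¹ : (H β)ˣ) : H β) * (D.anti (inv_inv β) x * (g β : H β)) := rfl

theorem IsPivot.antiInv_pivot {D : HopfGCoalgebra k G H} {g : ∀ γ : G, (H γ)ˣ}
    (hpiv : D.IsPivot g) (β : G) :
    D.antiInv g β (g β⁻¹ : H β⁻¹) = (((g β)⁻¹ : (H β)ˣ) : H β) := by
  rw [antiInv_apply, hpiv.anti_pivot]; simp

/-- `Σ S⁻¹(a₍₂₎) a₍₁₎ = ε(a)`. -/
theorem IsPivot.antiInv_left {D : HopfGCoalgebra k G H} {g : ∀ γ : G, (H γ)ˣ}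
    (hpiv : D.IsPivot g) (β : G) (h1 : 1 = β * β⁻¹) (a : H 1) :
    LinearMap.mul' k (H β) (TensorProduct.comm k (H β) (H β)
      (TensorProduct.map LinearMap.id (D.antiInv g β) (D.cop h1 a))) = D.ε a • 1 := by
  have key : ∀ z : H β ⊗[k] H β⁻¹,
      LinearMap.mul' k (H β) (TensorProduct.comm k (H β) (H β)
        (TensorProduct.map LinearMap.id (D.antiInv g β) z))
      = (((g β)⁻¹ : (H β)ˣ) : H β) * (D.anti (inv_inv β) (LinearMap.mul' k (H β⁻¹)
          (TensorProduct.map (D.anti rfl) LinearMap.id z)) * (g β : H β)) := by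
    intro z
    induction z using TensorProduct.induction_on with
    | zero => simp
    | tmul p q =>
      simp only [TensorProduct.map_tmul, TensorProduct.comm_tmul, LinearMap.mul'_apply,
        LinearMap.id_apply, D.anti_mul, antiInv_apply, mul_assoc]
      rw [hpiv.anti_anti]
    | add p q hp hq => simp only [map_add, hp, hq, mul_add, add_mul]
  rw [key, D.anti_left, map_smul, D.anti_one]
  simp

/-- `Σ a₍₂₎ S⁻¹(a₍₁₎) = ε(a)`. -/
theorem IsPivot.antiInv_right {D : HopfGCoalgebra k G H} {g : ∀ γ : G, (H γ)ˣ}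
    (hpiv : D.IsPivot g) (β : G) (h1 : 1 = β⁻¹ * β) (a : H 1) :
    LinearMap.mul' k (H β) (TensorProduct.comm k (H β) (H β)
      (TensorProduct.map (D.antiInv g β) LinearMap.id (D.cop h1 a))) = D.ε a • 1 := by
  have key : ∀ z : H β⁻¹ ⊗[k] H β,
      LinearMap.mul' k (H β) (TensorProduct.comm k (H β) (H β)
        (TensorProduct.map (D.antiInv g β) LinearMap.id z))
      = (((g β)⁻¹ : (H β)ˣ) : H β) * (D.anti (inv_inv β) (LinearMap.mul' k (H β⁻¹)
          (TensorProduct.map LinearMap.id (D.anti rfl) z)) * (g β : H β)) := by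
    intro z
    induction z using TensorProduct.induction_on with
    | zero => simp
    | tmul p q =>
      have h := hpiv.anti_anti rfl (inv_inv β) q
      have h2 : q * (((g β)⁻¹ : (H β)ˣ) : H β)
          = (((g β)⁻¹ : (H β)ˣ) : H β) * D.anti (inv_inv β) (D.anti rfl q) := by
        rw [Units.eq_inv_mul_iff_mul_eq, ← mul_assoc, ← h, Units.mul_inv_cancel_right]
      simp only [TensorProduct.map_tmul, TensorProduct.comm_tmul, LinearMap.mul'_apply,
        LinearMap.id_apply, D.anti_mul, antiInv_apply]
      rw [← mul_assoc, h2, mul_assoc, mul_assoc]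
    | add p q hp hq => simp only [map_add, hp, hq, mul_add, add_mul]
  rw [key, D.anti_right, map_smul, D.anti_one]
  simp

section Modules

variable {β : G} (W : Type) [AddCommGroup W] [Module k W] [Module (H β) W]
  [IsScalarTower k (H β) W]

/-- The action map `H_β → W`, `h ↦ h w`, linearly in `w`. -/
noncomputable def act : W →ₗ[k] H β →ₗ[k] W :=
  (Algebra.lsmul k k W : H β →ₐ[k] Module.End k W).toLinearMap.flip

@[simp]
theorem act_apply (w : W) (h : H β) : (act W : W →ₗ[k] H β →ₗ[k] W) w h = h • w := rfl

/-- The map `W ⊗ H_γ → W ⊗ H_α`, `w ⊗ h ↦ h₍₁₎ w ⊗ h₍₂₎`, for `γ = βα`. -/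
noncomputable def untwist (D : HopfGCoalgebra k G H) {α γ : G} (h : γ = β * α) :
    W ⊗[k] H γ →ₗ[k] W ⊗[k] H α :=
  TensorProduct.lift
    (((LinearMap.lcomp k _ (D.cop h).toLinearMap) ∘ₗ LinearMap.rTensorHom (H α)) ∘ₗ act W)

theorem untwist_tmul (D : HopfGCoalgebra k G H) {α γ : G} (h : γ = β * α) (w : W) (x : H γ) :
    untwist W D h (w ⊗ₜ x) = TensorProduct.map (act W w) LinearMap.id (D.cop h x) := rfl

/-- The map `W ⊗ H_α → W ⊗ H_γ`, `w ⊗ h ↦ S⁻¹(h₍₁₎) w ⊗ h₍₂₎`, for `γ = βα`. -/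
noncomputable def twist (D : HopfGCoalgebra k G H) (g : ∀ γ : G, (H γ)ˣ) {α γ : G}
    (h : α = β⁻¹ * γ) : W ⊗[k] H α →ₗ[k] W ⊗[k] H γ :=
  TensorProduct.lift
    (((LinearMap.lcomp k _ (D.cop h).toLinearMap) ∘ₗ LinearMap.rTensorHom (H γ)) ∘ₗ
      (LinearMap.lcomp k _ (D.antiInv g β)) ∘ₗ act W)

theorem twist_tmul (D : HopfGCoalgebra k G H) (g : ∀ γ : G, (H γ)ˣ) {α γ : G}
    (h : α = β⁻¹ * γ) (w : W) (x : H α) :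
    twist W D g h (w ⊗ₜ x)
      = TensorProduct.map (act W w ∘ₗ D.antiInv g β) LinearMap.id (D.cop h x) := rfl

variable {W}

/-- `untwist` and `twist` are inverse bijections: `S⁻¹` undoes the action of the first leg. -/
theorem untwist_twist {D : HopfGCoalgebra k G H} {g : ∀ γ : G, (H γ)ˣ} (hpiv : D.IsPivot g)
    {α γ : G} (h : γ = β * α) (h' : α = β⁻¹ * γ) (z : W ⊗[k] H α) :
    untwist W D h (twist W D g h' z) = z := by
  induction z using TensorProduct.induction_on with
  | zero => simp
  | add p q hp hq => simp only [map_add, hp, hq]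
  | tmul w x =>
    let T : (H β⁻¹ ⊗[k] H β) ⊗[k] H α →ₗ[k] W ⊗[k] H α :=
      TensorProduct.map (act W w ∘ₗ LinearMap.mul' k (H β) ∘ₗ
        (TensorProduct.comm k (H β) (H β)).toLinearMap ∘ₗ
          TensorProduct.map (D.antiInv g β) LinearMap.id) LinearMap.id
    have h1 : 1 = β⁻¹ * β := (inv_mul_cancel β).symm
    have key : ∀ z : H β⁻¹ ⊗[k] H γ,
        untwist W D h (TensorProduct.map (act W w ∘ₗ D.antiInv g β) LinearMap.id z)
        = T ((TensorProduct.assoc k (H β⁻¹) (H β) (H α)).symm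
          ((TensorProduct.map LinearMap.id (D.cop h).toLinearMap) z)) := by
      intro z
      induction z using TensorProduct.induction_on with
      | zero => simp
      | add p q hp hq => simp only [map_add, hp, hq]
      | tmul p q =>
        simp only [TensorProduct.map_tmul, LinearMap.id_apply, untwist_tmul,
          AlgHom.toLinearMap_apply]
        induction D.cop h q using TensorProduct.induction_on with
        | zero => simp
        | add p q hp hq => simp only [TensorProduct.tmul_add, map_add, hp, hq]
        | tmul b c => simp [T, mul_smul]
    rw [twist_tmul, key, D.sweedler_cancel_left h1 h h' T (TensorProduct.mk k W (H α) w)]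
    · rfl
    · intro a c
      simp only [T, TensorProduct.map_tmul, LinearMap.comp_apply, LinearEquiv.coe_coe,
        hpiv.antiInv_right β h1 a]
      simp [TensorProduct.smul_tmul']

theorem twist_untwist {D : HopfGCoalgebra k G H} {g : ∀ γ : G, (H γ)ˣ} (hpiv : D.IsPivot g)
    {α γ : G} (h : γ = β * α) (h' : α = β⁻¹ * γ) (z : W ⊗[k] H γ) :
    twist W D g h' (untwist W D h z) = z := by
  induction z using TensorProduct.induction_on with
  | zero => simp
  | add p q hp hq => simp only [map_add, hp, hq]
  | tmul w x =>
    let T : (H β ⊗[k] H β⁻¹) ⊗[k] H γ →ₗ[k] W ⊗[k] H γ :=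
      TensorProduct.map (act W w ∘ₗ LinearMap.mul' k (H β) ∘ₗ
        (TensorProduct.comm k (H β) (H β)).toLinearMap ∘ₗ
          TensorProduct.map LinearMap.id (D.antiInv g β)) LinearMap.id
    have h1 : 1 = β * β⁻¹ := (mul_inv_cancel β).symm
    have key : ∀ z : H β ⊗[k] H α,
        twist W D g h' (TensorProduct.map (act W w) LinearMap.id z)
        = T ((TensorProduct.assoc k (H β) (H β⁻¹) (H γ)).symm
          ((TensorProduct.map LinearMap.id (D.cop h').toLinearMap) z)) := by
      intro z
      induction z using TensorProduct.induction_on with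
      | zero => simp
      | add p q hp hq => simp only [map_add, hp, hq]
      | tmul p q =>
        simp only [TensorProduct.map_tmul, LinearMap.id_apply, twist_tmul,
          AlgHom.toLinearMap_apply]
        induction D.cop h' q using TensorProduct.induction_on with
        | zero => simp
        | add p q hp hq => simp only [TensorProduct.tmul_add, map_add, hp, hq]
        | tmul b c => simp [T, mul_smul]
    rw [untwist_tmul, key, D.sweedler_cancel_left h1 h' h T (TensorProduct.mk k W (H γ) w)]
    · rfl
    · intro a c
      simp only [T, TensorProduct.map_tmul, LinearMap.comp_apply, LinearEquiv.coe_coe,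
        hpiv.antiInv_left β h1 a]
      simp [TensorProduct.smul_tmul']

theorem tensorModule_smul (D : HopfGCoalgebra k G H) {α γ : G} (h : γ = β * α)
    {P : Type} [AddCommGroup P] [Module k P] [Module (H α) P] [IsScalarTower k (H α) P]
    (x : H γ) (w : W) (p : P) :
    letI := D.tensorModule β α γ h W P
    x • (w ⊗ₜ[k] p) = TensorProduct.map (act W w) (act P p) (D.cop h x) := by
  letI := D.tensorModule β α γ h W P
  change D.deltaRep β α γ h W P x (w ⊗ₜ[k] p) = _
  change Module.endTensorEndAlgHom (Algebra.TensorProduct.map (Algebra.lsmul k k W)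
    (Algebra.lsmul k k P) (D.cop h x)) (w ⊗ₜ[k] p) = _
  induction D.cop h x using TensorProduct.induction_on with
  | zero => simp
  | add p q hp hq => simp only [map_add, LinearMap.add_apply, hp, hq]
  | tmul b c => simp [Module.endTensorEndAlgHom_apply]

end Modules

end HopfGCoalgebra

/-! ### Factoring the identity of `W ⊗ H_α` through `H_{βα}` -/

namespace HopfGCoalgebra

variable {k G : Type} [Field k] [Group G] {H : G → Type}
  [∀ γ : G, Ring (H γ)] [∀ γ : G, Algebra k (H γ)]

section Maps

variable {β : G} (W : Type) [AddCommGroup W] [Module k W] [Module (H β) W]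
  [IsScalarTower k (H β) W]

/-- `untwist` intertwines the regular action on the second factor of `W ⊗ H_γ` with the diagonal
action on `W ⊗ H_α`, so `W ⊗ H_α` is free on the elements `w ⊗ 1`. -/
theorem untwist_eq_smul (D : HopfGCoalgebra k G H) {α γ : G} (h : γ = β * α)
    (w : W) (x : H γ) :
    letI := D.tensorModule β α γ h W (H α)
    untwist W D h (w ⊗ₜ x) = x • (w ⊗ₜ[k] (1 : H α)) := by
  letI := D.tensorModule β α γ h W (H α)
  have h1 : (act (H α) : H α →ₗ[k] H α →ₗ[k] H α) 1 = LinearMap.id := by ext; simp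
  rw [D.tensorModule_smul h, untwist_tmul, h1]

/-- The `H_γ`-linear map `H_γ → W ⊗ H_α`, `x ↦ x₍₁₎ w ⊗ x₍₂₎`. -/
noncomputable def freeIn (D : HopfGCoalgebra k G H) {α γ : G} (h : γ = β * α) (w : W) :
    letI := D.tensorModule β α γ h W (H α)
    H γ →ₗ[H γ] W ⊗[k] H α :=
  letI := D.tensorModule β α γ h W (H α)
  LinearMap.toSpanSingleton (H γ) (W ⊗[k] H α) (w ⊗ₜ[k] (1 : H α))

/-- The `H_γ`-linear map `W ⊗ H_α → H_γ`, `w ⊗ x ↦ l(S⁻¹(x₍₁₎) w) x₍₂₎`. -/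
noncomputable def freeOut (D : HopfGCoalgebra k G H) {g : ∀ γ : G, (H γ)ˣ}
    (hpiv : D.IsPivot g) {α γ : G} (h : γ = β * α) (h' : α = β⁻¹ * γ) (l : W →ₗ[k] k) :
    letI := D.tensorModule β α γ h W (H α)
    W ⊗[k] H α →ₗ[H γ] H γ :=
  letI := D.tensorModule β α γ h W (H α)
  { toFun := fun z => TensorProduct.lid k (H γ)
      (TensorProduct.map l LinearMap.id (twist W D g h' z))
    map_add' := fun x y => by simp only [map_add]
    map_smul' := fun x z => by
      rw [← untwist_twist hpiv h h' z]
      induction twist W D g h' z using TensorProduct.induction_on with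
      | zero => simp
      | add p q hp hq => simp only [map_add, smul_add, hp, hq]
      | tmul w y =>
        rw [untwist_eq_smul, ← mul_smul, ← untwist_eq_smul, ← untwist_eq_smul,
          twist_untwist hpiv, twist_untwist hpiv]
        simp }

theorem freeOut_apply (D : HopfGCoalgebra k G H) {g : ∀ γ : G, (H γ)ˣ}
    (hpiv : D.IsPivot g) {α γ : G} (h : γ = β * α) (h' : α = β⁻¹ * γ) (l : W →ₗ[k] k)
    (z : W ⊗[k] H α) :
    letI := D.tensorModule β α γ h W (H α)
    freeOut W D hpiv h h' l z = TensorProduct.lid k (H γ)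
      (TensorProduct.map l LinearMap.id (twist W D g h' z)) := rfl

theorem freeIn_apply (D : HopfGCoalgebra k G H) {α γ : G} (h : γ = β * α) (w : W) (x : H γ) :
    letI := D.tensorModule β α γ h W (H α)
    freeIn W D h w x = untwist W D h (w ⊗ₜ x) :=
  (untwist_eq_smul W D h w x).symm

theorem freeOut_freeIn (D : HopfGCoalgebra k G H) {g : ∀ γ : G, (H γ)ˣ}
    (hpiv : D.IsPivot g) {α γ : G} (h : γ = β * α) (h' : α = β⁻¹ * γ) (l : W →ₗ[k] k)
    (w : W) (x : H γ) :
    letI := D.tensorModule β α γ h W (H α)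
    freeOut W D hpiv h h' l (freeIn W D h w x) = l w • x := by
  rw [freeOut_apply, freeIn_apply, twist_untwist hpiv]
  simp

/-- The identity of `W ⊗ H_α` is a sum of endomorphisms factoring through the regular module,
indexed by a basis of `W`. -/
theorem sum_freeIn_freeOut (D : HopfGCoalgebra k G H) {g : ∀ γ : G, (H γ)ˣ}
    (hpiv : D.IsPivot g) {α γ : G} (h : γ = β * α) (h' : α = β⁻¹ * γ)
    {ι : Type} [Fintype ι] (b : Module.Basis ι k W) (z : W ⊗[k] H α) :
    letI := D.tensorModule β α γ h W (H α)
    ∑ j, freeIn W D h (b j) (freeOut W D hpiv h h' (b.coord j) z) = z := by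
  simp only [freeOut_apply, freeIn_apply]
  conv_rhs => rw [← untwist_twist hpiv h h' z]
  rw [← map_sum]
  congr 1
  induction twist W D g h' z using TensorProduct.induction_on with
  | zero => simp
  | add p q hp hq => simp only [map_add, TensorProduct.tmul_add, Finset.sum_add_distrib, hp, hq]
  | tmul w y =>
    simp only [TensorProduct.map_tmul, TensorProduct.lid_tmul, LinearMap.id_apply,
      ← TensorProduct.smul_tmul, ← TensorProduct.sum_tmul, Module.Basis.coord_apply,
      b.sum_repr]

/-- `W ⊗ H_α` is projective over `H_{βα}`. -/
theorem projective_tensor (D : HopfGCoalgebra k G H) {g : ∀ γ : G, (H γ)ˣ}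
    (hpiv : D.IsPivot g) [FiniteDimensional k W] {α γ : G} (h : γ = β * α) :
    letI := D.tensorModule β α γ h W (H α)
    Module.Projective (H γ) (W ⊗[k] H α) := by
  letI := D.tensorModule β α γ h W (H α)
  have h' : α = β⁻¹ * γ := by simp [h]
  let b := Module.finBasis k W
  refine Module.Projective.of_split (M := Fin (Module.finrank k W) → H γ)
    (LinearMap.pi fun j => freeOut W D hpiv h h' (b.coord j))
    (∑ j, (freeIn W D h (b j)).comp (LinearMap.proj j)) ?_
  ext1 z
  simpa using sum_freeIn_freeOut W D hpiv h h' b z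

/-- The `H_γ`-linear map `id_W ⊗ φ`. -/
noncomputable def lT (D : HopfGCoalgebra k G H) {α γ : G} (h : γ = β * α)
    {P Q : Type} [AddCommGroup P] [Module k P] [Module (H α) P] [IsScalarTower k (H α) P]
    [AddCommGroup Q] [Module k Q] [Module (H α) Q] [IsScalarTower k (H α) Q]
    (φ : P →ₗ[H α] Q) :
    letI := D.tensorModule β α γ h W P
    letI := D.tensorModule β α γ h W Q
    W ⊗[k] P →ₗ[H γ] W ⊗[k] Q :=
  letI := D.tensorModule β α γ h W P
  letI := D.tensorModule β α γ h W Q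
  { toFun := TensorProduct.map LinearMap.id (φ.restrictScalars k)
    map_add' := fun x y => map_add _ x y
    map_smul' := fun x z => by
      induction z using TensorProduct.induction_on with
      | zero => simp
      | add p q hp hq => simp only [map_add, smul_add, hp, hq]
      | tmul w p =>
        rw [TensorProduct.map_tmul, RingHom.id_apply, D.tensorModule_smul h,
          D.tensorModule_smul h, ← LinearMap.comp_apply, ← TensorProduct.map_comp]
        congr 2
        ext y
        simp }

theorem lT_apply (D : HopfGCoalgebra k G H) {α γ : G} (h : γ = β * α)
    {P Q : Type} [AddCommGroup P] [Module k P] [Module (H α) P] [IsScalarTower k (H α) P]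
    [AddCommGroup Q] [Module k Q] [Module (H α) Q] [IsScalarTower k (H α) Q]
    (φ : P →ₗ[H α] Q) (z : W ⊗[k] P) :
    letI := D.tensorModule β α γ h W P
    letI := D.tensorModule β α γ h W Q
    lT W D h φ z = TensorProduct.map LinearMap.id (φ.restrictScalars k) z := rfl

/-- The left partial trace in coordinates: `p ↦ Σⱼ (eʲ ⊗ id) f(x eⱼ ⊗ p)`, where `x` stands for
the inverse pivot. -/
theorem trL_apply (P : Type) [AddCommGroup P] [Module k P] [FiniteDimensional k W]
    (x : H β) (f : (W ⊗[k] P) →ₗ[k] (W ⊗[k] P)) (p : P) :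
    trL β W P x f p = ∑ j, TensorProduct.lid k P
      (TensorProduct.map ((Module.Basis.ofVectorSpace k W).coord j) LinearMap.id
        (f ((x • Module.Basis.ofVectorSpace k W j) ⊗ₜ p))) := by
  simp only [trL, LinearMap.comp_apply, LinearEquiv.coe_coe, TensorProduct.lid_symm_apply,
    TensorProduct.map_tmul, coevaluation_apply_one, map_sum, TensorProduct.comm_tmul,
    TensorProduct.sum_tmul, LinearMap.id_apply, TensorProduct.assoc_tmul,
    Algebra.lsmul_coe]
  refine Finset.sum_congr rfl fun j _ => ?_
  generalize f _ = z
  induction z using TensorProduct.induction_on with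
  | zero => simp
  | add p q hp hq => simp only [map_add, TensorProduct.tmul_add, hp, hq]
  | tmul w q => simp

end Maps

/-- A cyclic trace is determined by its values on a module of which the identity is a sum
of factorisations. -/
theorem IsCyclicTrace.eq_sum {t : TraceData k G H} (ht : IsCyclicTrace t) {γ : G}
    {P Q : Type}
    [AddCommGroup P] [Module k P] [Module (H γ) P] [IsScalarTower k (H γ) P]
    [FiniteDimensional k P] [Module.Projective (H γ) P]
    [AddCommGroup Q] [Module k Q] [Module (H γ) Q] [IsScalarTower k (H γ) Q]
    [FiniteDimensional k Q] [Module.Projective (H γ) Q]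
    {ι : Type} [Fintype ι] (a : ι → Q →ₗ[H γ] P) (b : ι → P →ₗ[H γ] Q)
    (hab : ∀ p, ∑ i, a i (b i p) = p) (f : P →ₗ[H γ] P) :
    t γ P f = ∑ i, t γ Q ((b i).comp (f.comp (a i))) := by
  have hf : f = ∑ i, (a i).comp ((b i).comp f) := by
    ext p; simp [hab]
  conv_lhs => rw [hf, map_sum]
  refine Finset.sum_congr rfl fun i _ => ?_
  rw [ht γ P Q ((b i).comp f) (a i), LinearMap.comp_assoc]

end HopfGCoalgebra

/-! ### The unibalanced relation and the left partial trace -/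

namespace HopfGCoalgebra

variable {k G : Type} [Field k] [Group G] {H : G → Type}
  [∀ γ : G, Ring (H γ)] [∀ γ : G, Algebra k (H γ)]

/-- The symmetrised left `G`-integral relation for the symmetrisation `x ↦ μ(g x)` of `μ`. -/
def IsUnibalanced (D : HopfGCoalgebra k G H) (g : ∀ γ : G, (H γ)ˣ)
    (μ : ∀ γ : G, H γ →ₗ[k] k) : Prop :=
  ∀ (α β : G) (x : H (α * β)),
        (TensorProduct.rid k (H α))
          ((TensorProduct.map
              (LinearMap.mulLeft k (((g α)⁻¹ : (H α)ˣ) : H α))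
              (μ β ∘ₗ LinearMap.mulLeft k (g β : H β)))
            (D.Δ α β x))
          = μ (α * β) ((g (α * β) : H (α * β)) * x) • 1

/-- The unibalanced relation with the pivot moved to the right-hand side,
`μ̃(x₍₂₎) x₍₁₎ = μ̃(x) g`. -/
theorem IsUnibalanced.cop {D : HopfGCoalgebra k G H} {g : ∀ γ : G, (H γ)ˣ}
    {μ : ∀ γ : G, H γ →ₗ[k] k} (hu : D.IsUnibalanced g μ) {α β γ : G} (h : γ = α * β)
    (x : H γ) :
    (TensorProduct.rid k (H α)) ((TensorProduct.map LinearMap.id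
        (μ β ∘ₗ LinearMap.mulLeft k (g β : H β))) (D.cop h x))
      = μ γ ((g γ : H γ) * x) • (g α : H α) := by
  subst h
  have h0 := congrArg (fun y => (g α : H α) * y) (hu α β x)
  simp only [mul_smul_comm, mul_one] at h0
  rw [← h0]
  change _ = _ * (TensorProduct.rid k (H α)) (TensorProduct.map _ _ (D.cop rfl x))
  induction D.cop rfl x using TensorProduct.induction_on with
  | zero => simp
  | add p q hp hq => simp only [map_add, mul_add, hp, hq]
  | tmul p q => simp

section

variable {β : G} (W : Type) [AddCommGroup W] [Module k W] [Module (H β) W]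
  [IsScalarTower k (H β) W]

/-- Under the unibalanced relation, the symmetrised integral of `l(S⁻¹(x₍₁₎) w) x₍₂₎` is
`l(g⁻¹ w)` times that of `x`. -/
theorem IsUnibalanced.integral_freeOut {D : HopfGCoalgebra k G H} {g : ∀ γ : G, (H γ)ˣ}
    (hpiv : D.IsPivot g)
    {μ : ∀ γ : G, H γ →ₗ[k] k} (hu : D.IsUnibalanced g μ) {α γ : G} (h : γ = β * α)
    (h' : α = β⁻¹ * γ) (l : W →ₗ[k] k) (z : W ⊗[k] H α) :
    letI := D.tensorModule β α γ h W (H α)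
    μ γ ((g γ : H γ) * freeOut W D hpiv h h' l z)
      = l ((((g β)⁻¹ : (H β)ˣ) : H β) • (TensorProduct.rid k W) ((TensorProduct.map LinearMap.id
        (μ α ∘ₗ LinearMap.mulLeft k (g α : H α))) z)) := by
  rw [freeOut_apply]
  induction z using TensorProduct.induction_on with
  | zero => simp
  | add p q hp hq => simp only [map_add, mul_add, smul_add, hp, hq]
  | tmul w x =>
    rw [twist_tmul]
    have key : ∀ c : H β⁻¹ ⊗[k] H γ,
        μ γ ((g γ : H γ) * TensorProduct.lid k (H γ) (TensorProduct.map l LinearMap.id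
          (TensorProduct.map (act W w ∘ₗ D.antiInv g β) LinearMap.id c)))
        = l (D.antiInv g β ((TensorProduct.rid k (H β⁻¹)) ((TensorProduct.map LinearMap.id
        (μ γ ∘ₗ LinearMap.mulLeft k (g γ : H γ))) c)) • w) := by
      intro c
      induction c using TensorProduct.induction_on with
      | zero => simp
      | add p q hp hq => simp only [map_add, mul_add, add_smul, hp, hq]
      | tmul p q => simp [mul_comm]
    rw [key, hu.cop h' x, map_smul (D.antiInv g β), hpiv.antiInv_pivot, smul_assoc]
    simp only [TensorProduct.map_tmul, TensorProduct.rid_tmul, LinearMap.id_apply,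
      LinearMap.comp_apply, LinearMap.mulLeft_apply]
    exact congrArg l ((act W : W →ₗ[k] H β →ₗ[k] W).map_smul₂ _ w _).symm

theorem lid_map_eq_rid_map {P Q : Type} [AddCommGroup P] [Module k P] [AddCommGroup Q]
    [Module k Q] (l : W →ₗ[k] k) (b : P →ₗ[k] Q) (m : Q →ₗ[k] k) (z : W ⊗[k] P) :
    m (b (TensorProduct.lid k P (TensorProduct.map l LinearMap.id z)))
      = l (TensorProduct.rid k W (TensorProduct.map LinearMap.id m
        (TensorProduct.map LinearMap.id b z))) := by
  induction z using TensorProduct.induction_on with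
  | zero => simp
  | add p q hp hq => simp only [map_add, hp, hq]
  | tmul w p => simp [mul_comm]

/-- Cyclicity of the `k`-linear trace on `W`, written in a basis. -/
theorem sum_coord_comm {ι : Type} [Fintype ι] (b : Module.Basis ι k W) (A B : W →ₗ[k] W) :
    ∑ j, b.coord j (A (B (b j))) = ∑ j, b.coord j (B (A (b j))) := by
  classical
  have := LinearMap.trace_mul_comm k A B
  rw [LinearMap.trace_eq_matrix_trace k b, LinearMap.trace_eq_matrix_trace k b] at this
  simpa [Matrix.trace, LinearMap.toMatrix_apply] using this

end

variable [∀ γ : G, FiniteDimensional k (H γ)]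

/-- Cyclicity reduces both `t_{W⊗P}(f)` and `t_P(tr^l_W(f))` to traces over `W`: with `Φᵢ` the
contraction of `f` by `μ̃` at the `i`-th member of a dual basis of `P`, the first is
`Σᵢ tr(g⁻¹ Φᵢ)` and the second is `Σᵢ tr(Φᵢ g⁻¹)`. -/
theorem IsUnibalanced.hasLeftPartialTraceProperty
    {D : HopfGCoalgebra k G H} {g : ∀ γ : G, (H γ)ˣ} (hpiv : D.IsPivot g)
    {μ : ∀ γ : G, H γ →ₗ[k] k} (hu : D.IsUnibalanced g μ)
    {t : TraceData k G H} (ht : IsCyclicTrace t)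
    (htμ : ∀ (γ : G) (f : H γ →ₗ[H γ] H γ), t γ (H γ) f = μ γ ((g γ : H γ) * f 1)) :
    D.HasLeftPartialTraceProperty g t := by
  intro α β P W _ _ _ _ _ _ _ _ _ _ _
  letI := D.tensorModule β α (β * α) rfl W P
  letI := D.tensorModule β α (β * α) rfl W (H α)
  haveI := D.tensorModuleTower β α (β * α) rfl W P
  intro _ f f' hf
  have h' : α = β⁻¹ * (β * α) := by simp
  haveI : Module.Finite (H α) P := Module.Finite.of_restrictScalars_finite k (H α) P
  obtain ⟨n, A, B, -, -, hAB⟩ := Module.Finite.exists_comp_eq_id_of_projective (H α) P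
  -- a dual basis `(aᵢ, bᵢ)` of `P`, with `aᵢ` recorded as the map `h ↦ h aᵢ`
  let a : Fin n → H α →ₗ[H α] P := fun i => A.comp (LinearMap.single (H α) (fun _ => H α) i)
  let b : Fin n → P →ₗ[H α] H α := fun i => (LinearMap.proj i).comp B
  have hab : ∀ p, ∑ i, a i (b i p) = p := by
    intro p
    have hp := LinearMap.congr_fun hAB p
    simp only [LinearMap.comp_apply, LinearMap.id_apply] at hp
    conv_rhs => rw [← hp]
    simp only [a, b, LinearMap.comp_apply, LinearMap.proj_apply, ← map_sum]
    congr 1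
    exact LinearMap.sum_single_apply (fun _ => H α) (B p)
  let e := Module.Basis.ofVectorSpace k W
  let a' : Fin n × _ → H (β * α) →ₗ[H (β * α)] W ⊗[k] P := fun ij =>
    (lT W D rfl (a ij.1)).comp (freeIn W D rfl (e ij.2))
  let b' : Fin n × _ → W ⊗[k] P →ₗ[H (β * α)] H (β * α) := fun ij =>
    (freeOut W D hpiv rfl h' (e.coord ij.2)).comp (lT W D rfl (b ij.1))
  -- combined with a basis of `W`, it factors the identity of `W ⊗ P` through `H_{βα}`
  have hab' : ∀ z, ∑ ij, a' ij (b' ij z) = z := by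
    intro z
    rw [Fintype.sum_prod_type]
    simp only [a', b', LinearMap.comp_apply, ← map_sum, sum_freeIn_freeOut]
    simp only [lT_apply]
    induction z using TensorProduct.induction_on with
    | zero => simp
    | add p q hp hq => simp only [map_add, Finset.sum_add_distrib, hp, hq]
    | tmul w p =>
      simp only [TensorProduct.map_tmul, LinearMap.id_apply, LinearMap.restrictScalars_apply,
        ← TensorProduct.tmul_sum, hab]
  rw [ht.eq_sum a' b' hab' f, ht.eq_sum a b hab f', Fintype.sum_prod_type]
  refine Finset.sum_congr rfl fun i _ => ?_
  -- `Φ` is the contraction of the `P`-leg of `f (· ⊗ aᵢ 1)` by the symmetrised integral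
  let Φ : W →ₗ[k] W := (TensorProduct.rid k W).toLinearMap ∘ₗ
    TensorProduct.map LinearMap.id (μ α ∘ₗ LinearMap.mulLeft k (g α : H α)) ∘ₗ
    TensorProduct.map LinearMap.id ((b i).restrictScalars k) ∘ₗ f.restrictScalars k ∘ₗ
      (TensorProduct.mk k W P).flip (a i 1)
  let γ' : W →ₗ[k] W := Algebra.lsmul k k W (((g β)⁻¹ : (H β)ˣ) : H β)
  have hL : ∀ j, t (β * α) (H (β * α)) ((b' (i, j)).comp (f.comp (a' (i, j))))
      = e.coord j (γ' (Φ (e j))) := by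
    intro j
    rw [htμ]
    simp only [a', b', LinearMap.comp_apply]
    rw [hu.integral_freeOut W hpiv rfl h', lT_apply, lT_apply]
    simp only [freeIn, LinearMap.toSpanSingleton_apply, one_smul]
    rfl
  have hR : t α (H α) ((b i).comp (f'.comp (a i))) = ∑ j, e.coord j (Φ (γ' (e j))) := by
    rw [htμ]
    have h1 : f' (a i 1) = trL β W P (((g β)⁻¹ : (H β)ˣ) : H β) (f.restrictScalars k) (a i 1) :=
      LinearMap.congr_fun hf (a i 1)
    change μ α ((g α : H α) * b i (f' (a i 1))) = _
    rw [h1, trL_apply, map_sum, Finset.mul_sum, map_sum]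
    refine Finset.sum_congr rfl fun j _ => ?_
    exact lid_map_eq_rid_map W (e.coord j) ((b i).restrictScalars k)
      (μ α ∘ₗ LinearMap.mulLeft k (g α : H α)) _
  rw [hR, sum_coord_comm W e Φ γ']
  exact Finset.sum_congr rfl fun j _ => hL j

/-- The left partial trace over `H_β` of `w ⊗ p ↦ l(S⁻¹(p₍₁₎) w) p₍₂₎ x₍₁₎ ⊗ p₍₃₎ x₍₂₎`, written
out in coordinates, is right multiplication by `l(g⁻¹ x₍₁₎) x₍₂₎`. -/
theorem trL_test {D : HopfGCoalgebra k G H} {g : ∀ γ : G, (H γ)ˣ} (hpiv : D.IsPivot g)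
    {α β γ : G} (h : γ = β * α) (h' : α = β⁻¹ * γ) (l : H β →ₗ[k] k) (x : H γ) (p : H α)
    {ι : Type} [Fintype ι] (e : Module.Basis ι k (H β)) :
    letI := D.tensorModule β α γ h (H β) (H α)
    ∑ j, TensorProduct.lid k (H α) (TensorProduct.map (e.coord j) LinearMap.id
      (D.cop h (freeOut (H β) D hpiv h h' l
        (((((g β)⁻¹ : (H β)ˣ) : H β) • e j) ⊗ₜ p) * x)))
      = p * TensorProduct.lid k (H α) (TensorProduct.map
        (l ∘ₗ LinearMap.mulLeft k (((g β)⁻¹ : (H β)ˣ) : H β)) LinearMap.id (D.cop h x)) := by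
  have h1 : 1 = β⁻¹ * β := (inv_mul_cancel β).symm
  let Θ : H β ⊗[k] H α →ₗ[k] H α := (TensorProduct.lid k (H α)).toLinearMap ∘ₗ
    TensorProduct.map (l ∘ₗ LinearMap.mulLeft k (((g β)⁻¹ : (H β)ˣ) : H β)) LinearMap.id ∘ₗ
      LinearMap.mulRight k (D.cop h x)
  have hΘ : ∀ c : H α, Θ (1 ⊗ₜ c) = c * TensorProduct.lid k (H α) (TensorProduct.map
        (l ∘ₗ LinearMap.mulLeft k (((g β)⁻¹ : (H β)ˣ) : H β)) LinearMap.id (D.cop h x)) := by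
    intro c
    simp only [Θ, LinearMap.comp_apply, LinearMap.mulRight_apply]
    induction D.cop h x using TensorProduct.induction_on with
    | zero => simp
    | add p q hp hq => simp only [map_add, mul_add, hp, hq]
    | tmul p q => simp
  let T : (H β⁻¹ ⊗[k] H β) ⊗[k] H α →ₗ[k] H α :=
    Θ ∘ₗ TensorProduct.map (LinearMap.mul' k (H β) ∘ₗ
      TensorProduct.map (D.anti (inv_inv β)) LinearMap.id) LinearMap.id
  have hsum : ∀ s z : H β, ∑ j, l (s * e j) * e.coord j z = l (s * z) := by
    intro s z
    conv_rhs => rw [← e.sum_repr z, Finset.mul_sum, map_sum]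
    refine Finset.sum_congr rfl fun j _ => ?_
    simp [mul_comm]
  have key : ∀ c : H β⁻¹ ⊗[k] H γ,
      ∑ j, TensorProduct.lid k (H α) (TensorProduct.map (e.coord j) LinearMap.id
        (D.cop h (TensorProduct.lid k (H γ) (TensorProduct.map l LinearMap.id
          (TensorProduct.map (act (H β) ((((g β)⁻¹ : (H β)ˣ) : H β) • e j) ∘ₗ D.antiInv g β)
            LinearMap.id c)) * x)))
      = T ((TensorProduct.assoc k (H β⁻¹) (H β) (H α)).symm
          ((TensorProduct.map LinearMap.id (D.cop h).toLinearMap) c)) := by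
    intro c
    induction c using TensorProduct.induction_on with
    | zero => simp
    | add p q hp hq => simp only [map_add, add_mul, Finset.sum_add_distrib, hp, hq]
    | tmul s d =>
      simp only [TensorProduct.map_tmul, LinearMap.id_apply, TensorProduct.lid_tmul,
        smul_mul_assoc, map_smul, map_mul, AlgHom.toLinearMap_apply, LinearMap.comp_apply,
        T, Θ, LinearMap.mulRight_apply]
      generalize D.cop h x = X
      induction D.cop h d using TensorProduct.induction_on with
      | zero => simp
      | add p q hp hq =>
        simp only [map_add, add_mul, smul_add, Finset.sum_add_distrib, hp, hq,
          TensorProduct.tmul_add]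
      | tmul u v =>
        induction X using TensorProduct.induction_on with
        | zero => simp
        | add p q hp hq =>
          simp only [map_add, mul_add, smul_add, Finset.sum_add_distrib, hp, hq]
        | tmul y z =>
          have hs := hsum ((((g β)⁻¹ : (H β)ˣ) : H β) * D.anti (inv_inv β) s) (u * y)
          simp only [Algebra.TensorProduct.tmul_mul_tmul, TensorProduct.map_tmul,
            TensorProduct.lid_tmul, LinearMap.id_apply, smul_smul, ← Finset.sum_smul,
            TensorProduct.assoc_symm_tmul, LinearMap.comp_apply, LinearMap.mul'_apply,
            LinearMap.mulLeft_apply, act_apply, antiInv_apply, smul_eq_mul, mul_assoc,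
            Units.mul_inv_cancel_left] at hs ⊢
          rw [hs]
          simp
  simp only [freeOut_apply, twist_tmul]
  rw [key, D.sweedler_cancel_left h1 h h' T (Θ ∘ₗ TensorProduct.mk k (H β) (H α) 1)]
  · exact hΘ p
  · intro a c
    simp only [T, LinearMap.comp_apply, TensorProduct.map_tmul, D.anti_left (inv_inv β) h1]
    simp only [LinearMap.id_apply, ← TensorProduct.smul_tmul', map_smul]
    rfl

/-- The unibalanced relation follows from the left partial trace property for the endomorphisms
`z ↦ v_l(z) x · (1 ⊗ 1)` of `H_β ⊗ H_α`, with `v_l` the map `freeOut` of an arbitrary linear form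
`l` on `H_β`. -/
theorem isUnibalanced_of_hasLeftPartialTraceProperty
    {D : HopfGCoalgebra k G H} {g : ∀ γ : G, (H γ)ˣ} (hpiv : D.IsPivot g)
    {μ : ∀ γ : G, H γ →ₗ[k] k}
    {t : TraceData k G H} (ht : IsCyclicTrace t)
    (htμ : ∀ (γ : G) (f : H γ →ₗ[H γ] H γ), t γ (H γ) f = μ γ ((g γ : H γ) * f 1))
    (hl : D.HasLeftPartialTraceProperty g t) :
    D.IsUnibalanced g μ := by
  intro β α x
  letI := D.tensorModule β α (β * α) rfl (H β) (H α)
  haveI := D.tensorModuleTower β α (β * α) rfl (H β) (H α)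
  haveI := projective_tensor (H β) D hpiv (rfl : β * α = β * α)
  have h' : α = β⁻¹ * (β * α) := by simp
  rw [← sub_eq_zero, ← Module.forall_dual_apply_eq_zero_iff k]
  intro l
  rw [map_sub, sub_eq_zero]
  let y : H α := TensorProduct.lid k (H α) (TensorProduct.map
        (l ∘ₗ LinearMap.mulLeft k (((g β)⁻¹ : (H β)ˣ) : H β)) LinearMap.id (D.cop rfl x))
  let r : H (β * α) →ₗ[H (β * α)] H (β * α) := LinearMap.toSpanSingleton _ _ x
  let u := freeIn (H β) D (rfl : β * α = β * α) (1 : H β)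
  let v := freeOut (H β) D hpiv (rfl : β * α = β * α) h' l
  let f' : H α →ₗ[H α] H α := LinearMap.toSpanSingleton _ _ y
  have h0 := hl α β (H α) (H β) ((u.comp r).comp v) f' ?_
  · rw [ht (β * α) (H β ⊗[k] H α) (H (β * α)) v (u.comp r), htμ, htμ] at h0
    simp only [LinearMap.comp_apply, u, v, freeOut_freeIn] at h0
    simp only [r, f', LinearMap.toSpanSingleton_apply, one_smul, mul_smul_comm, map_smul] at h0
    rw [map_smul, smul_eq_mul]
    refine Eq.trans ?_ (h0.symm.trans (mul_comm _ _))
    change l (TensorProduct.rid k (H β) (TensorProduct.map _ _ (D.cop rfl x))) = _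
    simp only [y]
    induction D.cop rfl x using TensorProduct.induction_on with
    | zero => simp
    | add p q hp hq => simp only [map_add, mul_add, hp, hq]
    | tmul p q => simp [mul_comm]
  · ext p
    rw [trL_apply]
    have h1 : ∀ z, ((u.comp r).comp v) z = D.cop rfl (v z * x) := by
      intro z
      have h2 : (act (H β) : H β →ₗ[k] H β →ₗ[k] H β) 1 = LinearMap.id := by ext; simp
      simp only [LinearMap.comp_apply, u, r, freeIn_apply, untwist_tmul, h2,
        LinearMap.toSpanSingleton_apply, smul_eq_mul, TensorProduct.map_id, LinearMap.id_apply]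
    simp only [LinearMap.restrictScalars_apply, h1]
    exact (trL_test hpiv rfl h' l x p _).symm

end HopfGCoalgebra

open HopfGCoalgebra in
/-- `(H, g)` is `G`-unibalanced (the symmetrised right `G`-integral also satisfies the
symmetrised left `G`-integral relation) if and only if the right modified trace determined by
`t_{H_α}(f) = μ̃_α(f(1_α))` is also a left modified trace. -/
theorem unibalanced_iff_left_modified_trace
    {k G : Type} [Field k] [Group G] {H : G → Type}
    [∀ γ : G, Ring (H γ)] [∀ γ : G, Algebra k (H γ)] [∀ γ : G, FiniteDimensional k (H γ)]
    (D : HopfGCoalgebra k G H) (g : ∀ γ : G, (H γ)ˣ) (hpiv : D.IsPivot g)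
    (huni : D.IsUnimodular)
    (μ : ∀ γ : G, H γ →ₗ[k] k) (hμ : D.IsRightIntegral μ) (hμ0 : ∀ γ : G, μ γ ≠ 0)
    (t : TraceData k G H) (ht : D.IsRightModifiedTrace g t)
    (htμ : ∀ (γ : G) (f : H γ →ₗ[H γ] H γ),
      t γ (H γ) f = μ γ ((g γ : H γ) * f 1)) :
    (∀ (α β : G) (x : H (α * β)),
        (TensorProduct.rid k (H α))
          ((TensorProduct.map
              (LinearMap.mulLeft k (((g α)⁻¹ : (H α)ˣ) : H α))
              (μ β ∘ₗ LinearMap.mulLeft k (g β : H β)))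
            (D.Δ α β x))
          = μ (α * β) ((g (α * β) : H (α * β)) * x) • 1)
      ↔ D.IsLeftModifiedTrace g t :=
  ⟨fun hu => ⟨ht.1, IsUnibalanced.hasLeftPartialTraceProperty hpiv hu ht.1 htμ⟩,
    fun hl => isUnibalanced_of_hasLeftPartialTraceProperty hpiv ht.1 htμ hl.2⟩
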